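/- Let ρ : ℝ^d → (0,∞) and suppose there exist constants C > 0 and N₀ ≥ 1 such that for all x, y ∈ ℝ^d, C⁻¹ (1 + |x−y|/ρ(x))^{−N₀} ≤ ρ(y)/ρ(x) ≤ C (1 + |x−y|/ρ(x))^{N₀/(N₀+1)}. Then there exists a constant C' > 0 such that for every x ∈ ℝ^d, r > 0, every y with |y − x| < r, and every positive integer k, one has 1 + 2^k r/ρ(y) ≥ C' (1 + r/ρ(x))^{−N₀/(N₀+1)} (1 + 2^k r/ρ(x)). -/

import Mathlib

open MeasureTheory Metric Real

noncomputable section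

theorem stmt0 (d : ℕ) (ρ : EuclideanSpace ℝ (Fin d) → ℝ)
    (hρ : ∀ x, 0 < ρ x) (C N₀ : ℝ) (hC : 0 < C) (hN₀ : 1 ≤ N₀)
    (hcomp : ∀ x y, C⁻¹ * (1 + dist x y / ρ x) ^ (-N₀) ≤ ρ y / ρ x ∧
      ρ y / ρ x ≤ C * (1 + dist x y / ρ x) ^ (N₀ / (N₀ + 1))) :
    ∃ C' > (0:ℝ), ∀ (x : EuclideanSpace ℝ (Fin d)) (r : ℝ), 0 < r →
      ∀ y, dist y x < r → ∀ k : ℕ, 1 ≤ k →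
        C' * (1 + r / ρ x) ^ (-(N₀ / (N₀ + 1))) * (1 + 2 ^ k * r / ρ x) ≤
          1 + 2 ^ k * r / ρ y := by
  have hD : 0 < max 1 C := lt_max_of_lt_left one_pos
  refine ⟨(max 1 C)⁻¹, inv_pos.mpr hD, fun x r hr y hy k _ => ?_⟩
  have hx := hρ x
  have hy' := hρ y
  have hθ : 0 ≤ N₀ / (N₀ + 1) := by positivity
  have hbase : 1 ≤ 1 + r / ρ x := le_add_of_nonneg_right (by positivity)
  rw [rpow_neg (by positivity), ← mul_inv, inv_mul_le_iff₀ (by positivity)]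
  set M := (1 + r / ρ x) ^ (N₀ / (N₀ + 1)) with hM
  have hM1 : 1 ≤ M := one_le_rpow hbase hθ
  have hDM : 1 ≤ max 1 C * M := one_le_mul_of_one_le_of_one_le (le_max_left 1 C) hM1
  have hratio : ρ y / ρ x ≤ max 1 C * M := by
    refine (hcomp x y).2.trans ?_
    rw [dist_comm x y]
    have hle : (1 + dist y x / ρ x) ^ (N₀ / (N₀ + 1)) ≤ M := by
      rw [hM]
      gcongr
    gcongr
    exact le_max_right 1 C
  calc 1 + 2 ^ k * r / ρ x = 1 + ρ y / ρ x * (2 ^ k * r / ρ y) := by field_simp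
    _ ≤ max 1 C * M + max 1 C * M * (2 ^ k * r / ρ y) := by gcongr
    _ = max 1 C * M * (1 + 2 ^ k * r / ρ y) := by ring
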